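/- For every t > 0 and every K > 1, writing r = √(t/(1+t)) and r' = 1/√(1+t), one has t·exp(2(K−1)·μ(r')) < η_K(t) < t·exp(4(K−1)·𝒦(r)·𝒦'(r)/π). -/

import Mathlib

open Set Filter

/-- Complete elliptic integral of the first kind. -/
noncomputable def ellK (r : ℝ) : ℝ :=
  ∫ θ in (0:ℝ)..(Real.pi / 2), (1 - r ^ 2 * Real.sin θ ^ 2) ^ (-(1/2) : ℝ)

/-- The Grötzsch modulus μ(r) = (π/2)·𝒦'(r)/𝒦(r). -/
noncomputable def mu (r : ℝ) : ℝ :=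
  Real.pi / 2 * ellK (Real.sqrt (1 - r ^ 2)) / ellK r

/-! Put `L r = log (1 / r² - 1)`, so that `L s = log t` for `s = 1 / √(1 + t)`, and
`L u = log (η_K t)` when `μ u = K μ s`. The Legendre relation gives
`μ'(r) = -π² / (4 r (1 - r²) 𝒦(r)²)`, while `L'(r) = -2 / (r (1 - r²))`, so by Cauchy's mean value
theorem the increments of `L` and `μ` over `[u, s]` are in the ratio `8 𝒦(c)² / π²` for some
`c ∈ (u, s)`. As `𝒦` increases strictly from `𝒦(0) = π / 2`, this ratio lies strictly between `2`
and `8 𝒦(s)² / π²`, and the increment of `μ` is `(K - 1) μ s`. -/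

open scoped Topology Real

section ParametricIntegral

variable {𝕜 E : Type*} [RCLike 𝕜] [NormedAddCommGroup E] [NormedSpace ℝ E] [NormedSpace 𝕜 E]

theorem hasDerivAt_intervalIntegral_of_continuousOn_deriv {F F' : 𝕜 → ℝ → E} {U : Set 𝕜}
    {a b : ℝ} {x₀ : 𝕜} (hU : U ∈ 𝓝 x₀) (hF : ∀ x ∈ U, ContinuousOn (F x) (uIcc a b))
    (hF' : ContinuousOn (Function.uncurry F') (U ×ˢ uIcc a b))
    (hderiv : ∀ x ∈ U, ∀ y ∈ uIcc a b, HasDerivAt (F · y) (F' x y) x) :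
    HasDerivAt (fun x ↦ ∫ y in a..b, F x y) (∫ y in a..b, F' x₀ y) x₀ := by
  obtain ⟨ε, hε, hball⟩ := Metric.nhds_basis_closedBall.mem_iff.1 hU
  obtain ⟨C, hC⟩ := ((isCompact_closedBall x₀ ε).prod isCompact_uIcc).exists_bound_of_continuousOn
    (hF'.mono (prod_mono_left hball))
  have hF'x₀ : ContinuousOn (F' x₀) (uIcc a b) :=
    hF'.comp (f := fun y ↦ (x₀, y)) (by fun_prop) fun y hy ↦ ⟨mem_of_mem_nhds hU, hy⟩
  refine (intervalIntegral.hasDerivAt_integral_of_dominated_loc_of_deriv_le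
    (bound := fun _ ↦ C) (Metric.closedBall_mem_nhds x₀ hε) ?_
    (hF x₀ (mem_of_mem_nhds hU)).intervalIntegrable
    hF'x₀.intervalIntegrable.def'.aestronglyMeasurable ?_ (by simp) ?_).2
  · filter_upwards [hU] with x hx
    exact (hF x hx).intervalIntegrable.def'.aestronglyMeasurable
  · exact .of_forall fun y hy x hx ↦ hC (x, y) ⟨hx, uIoc_subset_uIcc hy⟩
  · exact .of_forall fun y hy x hx ↦ hderiv x (hball hx) y (uIoc_subset_uIcc hy)

end ParametricIntegral

section EllipticIntegral

/-- The integral `∫₀^{π/2} (1 - m sin² θ)^p dθ` as a function of the parameter `m = r²`: the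
complete elliptic integrals of the first and second kind are the cases `p = -1/2` and `p = 1/2`.
Keeping the exponent free lets one recurrence in `p` give both of their derivatives. -/
noncomputable def ellipticIntegral (p m : ℝ) : ℝ :=
  ∫ θ in (0 : ℝ)..π / 2, (1 - m * Real.sin θ ^ 2) ^ p

/-- The complete elliptic integral of the first kind, as a function of the parameter `m = r²`. -/
local notation "𝖪" => ellipticIntegral (-(1 / 2))

/-- The complete elliptic integral of the second kind, as a function of the parameter `m = r²`. -/
local notation "𝖤" => ellipticIntegral (1 / 2)

variable {p m : ℝ}

lemma one_sub_mul_sin_sq_pos (hm : m < 1) (θ : ℝ) : 0 < 1 - m * Real.sin θ ^ 2 := by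
  have hle : m * Real.sin θ ^ 2 ≤ max m 0 :=
    (mul_le_mul_of_nonneg_right (le_max_left m 0) (sq_nonneg _)).trans
      (mul_le_of_le_one_right (le_max_right m 0) (Real.sin_sq_le_one θ))
  exact sub_pos.2 (hle.trans_lt (max_lt hm one_pos))

lemma continuous_one_sub_mul_sin_sq_rpow (hm : m < 1) (p : ℝ) :
    Continuous fun θ : ℝ ↦ (1 - m * Real.sin θ ^ 2) ^ p :=
  Continuous.rpow_const (by fun_prop) fun θ ↦ .inl (one_sub_mul_sin_sq_pos hm θ).ne'

lemma ellipticIntegral_zero (p : ℝ) : ellipticIntegral p 0 = π / 2 := by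
  simp [ellipticIntegral]

lemma ellipticIntegral_half_one : 𝖤 1 = 1 := by
  have hcos : EqOn (fun θ ↦ (1 - 1 * Real.sin θ ^ 2) ^ (1 / 2 : ℝ)) Real.cos (uIcc 0 (π / 2)) := by
    intro θ hθ
    rw [uIcc_of_le (by positivity)] at hθ
    have : 0 ≤ Real.cos θ := Real.cos_nonneg_of_mem_Icc ⟨by linarith [hθ.1, Real.pi_pos], hθ.2⟩
    simp only [one_mul, ← Real.cos_sq', ← Real.sqrt_eq_rpow, Real.sqrt_sq this]
  rw [ellipticIntegral, intervalIntegral.integral_congr hcos]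
  simp

lemma ellipticIntegral_pos (hm : m < 1) (p : ℝ) : 0 < ellipticIntegral p m :=
  intervalIntegral.intervalIntegral_pos_of_pos
    ((continuous_one_sub_mul_sin_sq_rpow hm p).intervalIntegrable _ _)
    (fun θ ↦ Real.rpow_pos_of_pos (one_sub_mul_sin_sq_pos hm θ) p) (by positivity)

lemma ellipticIntegral_le (hp : p ≤ 0) (hm₀ : 0 ≤ m) (hm : m < 1) :
    ellipticIntegral p m ≤ π / 2 * (1 - m) ^ p := by
  calc ellipticIntegral p m ≤ ∫ _ in (0 : ℝ)..π / 2, (1 - m) ^ p := by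
        refine intervalIntegral.integral_mono (by positivity)
          ((continuous_one_sub_mul_sin_sq_rpow hm p).intervalIntegrable _ _) (by simp) fun θ ↦ ?_
        refine Real.rpow_le_rpow_of_nonpos (by linarith) ?_ hp
        nlinarith [Real.sin_sq_le_one θ]
    _ = π / 2 * (1 - m) ^ p := by simp

lemma continuous_ellipticIntegral (hp : 0 ≤ p) : Continuous (ellipticIntegral p) :=
  intervalIntegral.continuous_parametric_intervalIntegral_of_continuous'
    (Continuous.rpow_const (by fun_prop) fun _ ↦ .inr hp) _ _

lemma hasDerivAt_ellipticIntegral_integral (p : ℝ) (hm : m < 1) :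
    HasDerivAt (ellipticIntegral p)
      (∫ θ in (0 : ℝ)..π / 2, -p * (Real.sin θ ^ 2 * (1 - m * Real.sin θ ^ 2) ^ (p - 1))) m := by
  refine hasDerivAt_intervalIntegral_of_continuousOn_deriv (Iio_mem_nhds hm)
    (F' := fun m θ ↦ -p * (Real.sin θ ^ 2 * (1 - m * Real.sin θ ^ 2) ^ (p - 1)))
    (fun x hx ↦ (continuous_one_sub_mul_sin_sq_rpow hx p).continuousOn) ?_ fun x hx θ _ ↦ ?_
  · refine continuousOn_const.mul (.mul (by fun_prop) (.rpow_const (by fun_prop) ?_))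
    exact fun x hx ↦ .inl (one_sub_mul_sin_sq_pos hx.1 x.2).ne'
  · have hΔ : HasDerivAt (fun x : ℝ ↦ 1 - x * Real.sin θ ^ 2) (-Real.sin θ ^ 2) x := by
      simpa using ((hasDerivAt_id x).mul_const (Real.sin θ ^ 2)).const_sub 1
    exact (hΔ.rpow_const (.inl (one_sub_mul_sin_sq_pos hx θ).ne')).congr_deriv (by ring)

lemma hasDerivAt_ellipticIntegral (p : ℝ) (hm : m < 1) (hm₀ : m ≠ 0) :
    HasDerivAt (ellipticIntegral p)
      (p * (ellipticIntegral p m - ellipticIntegral (p - 1) m) / m) m := by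
  refine (hasDerivAt_ellipticIntegral_integral p hm).congr_deriv ?_
  rw [ellipticIntegral, ellipticIntegral, ← intervalIntegral.integral_sub
      ((continuous_one_sub_mul_sin_sq_rpow hm _).intervalIntegrable _ _)
      ((continuous_one_sub_mul_sin_sq_rpow hm _).intervalIntegrable _ _),
    ← intervalIntegral.integral_const_mul, ← intervalIntegral.integral_div]
  congr 1 with θ
  have hΔ₀ := (one_sub_mul_sin_sq_pos hm θ).ne'
  rw [Real.rpow_sub_one hΔ₀, eq_div_iff hm₀]
  generalize hΔ : 1 - m * Real.sin θ ^ 2 = Δ at hΔ₀ ⊢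
  field_simp
  linear_combination p * Δ ^ p * hΔ

lemma strictMonoOn_ellipticIntegral (hp : p < 0) :
    StrictMonoOn (ellipticIntegral p) (Iio 1) := by
  refine strictMonoOn_of_hasDerivWithinAt_pos (convex_Iio 1)
    (fun m hm ↦ (hasDerivAt_ellipticIntegral_integral p hm).continuousAt.continuousWithinAt)
    (fun m hm ↦ (hasDerivAt_ellipticIntegral_integral p
      (interior_subset (s := Iio 1) hm)).hasDerivWithinAt) fun m hm ↦ ?_
  replace hm : m < 1 := interior_subset (s := Iio 1) hm
  refine intervalIntegral.intervalIntegral_pos_of_pos_on ?_ (fun θ hθ ↦ ?_) (by positivity)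
  · have := continuous_one_sub_mul_sin_sq_rpow hm (p - 1)
    exact Continuous.intervalIntegrable (by fun_prop) _ _
  · have hsin := Real.sin_pos_of_pos_of_lt_pi hθ.1 (by linarith [hθ.2, Real.pi_pos])
    have hΔ := Real.rpow_pos_of_pos (one_sub_mul_sin_sq_pos hm θ) (p - 1)
    have := neg_pos.2 hp
    positivity

lemma ellipticIntegral_recurrence (p : ℝ) (hm : m < 1) :
    2 * p * (1 - m) * ellipticIntegral (p - 1) m - (2 * p + 1) * (2 - m) * ellipticIntegral p m
      + (2 * p + 2) * ellipticIntegral (p + 1) m = 0 := by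
  -- Integrate the derivative of a function that vanishes at both endpoints.
  have hderiv (θ : ℝ) :
      HasDerivAt (fun θ ↦ m * (Real.sin θ * Real.cos θ * (1 - m * Real.sin θ ^ 2) ^ p))
        (2 * p * (1 - m) * (1 - m * Real.sin θ ^ 2) ^ (p - 1)
          - (2 * p + 1) * (2 - m) * (1 - m * Real.sin θ ^ 2) ^ p
          + (2 * p + 2) * (1 - m * Real.sin θ ^ 2) ^ (p + 1)) θ := by
    have hΔ₀ := (one_sub_mul_sin_sq_pos hm θ).ne'
    have hΔ : HasDerivAt (fun θ ↦ 1 - m * Real.sin θ ^ 2)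
        (-(m * (2 * Real.sin θ * Real.cos θ))) θ := by
      simpa using (((Real.hasDerivAt_sin θ).pow 2).const_mul m).const_sub 1
    refine ((((Real.hasDerivAt_sin θ).mul (Real.hasDerivAt_cos θ)).mul
      (hΔ.rpow_const (p := p) (.inl hΔ₀))).const_mul m).congr_deriv ?_
    simp only [Pi.mul_apply]
    rw [Real.rpow_add_one hΔ₀, Real.rpow_sub_one hΔ₀]
    field_simp
    simp only [Real.cos_sq']
    ring
  have hint (q : ℝ) := (continuous_one_sub_mul_sin_sq_rpow hm q).intervalIntegrable
    (μ := MeasureTheory.volume) 0 (π / 2)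
  have hFTC := intervalIntegral.integral_eq_sub_of_hasDerivAt (fun θ _ ↦ hderiv θ)
    ((((hint _).const_mul _).sub ((hint _).const_mul _)).add ((hint _).const_mul _))
  rw [intervalIntegral.integral_add (((hint _).const_mul _).sub ((hint _).const_mul _))
      ((hint _).const_mul _),
    intervalIntegral.integral_sub ((hint _).const_mul _) ((hint _).const_mul _)] at hFTC
  simpa [ellipticIntegral] using hFTC

lemma hasDerivAt_ellipticIntegral_half (hm : m < 1) (hm₀ : m ≠ 0) :
    HasDerivAt 𝖤 ((𝖤 m - 𝖪 m) / (2 * m)) m := by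
  refine (hasDerivAt_ellipticIntegral _ hm hm₀).congr_deriv ?_
  rw [show (1 / 2 - 1 : ℝ) = -(1 / 2) by norm_num]
  field

lemma hasDerivAt_ellipticIntegral_neg_half (hm : m < 1) (hm₀ : m ≠ 0) :
    HasDerivAt 𝖪 ((𝖤 m - (1 - m) * 𝖪 m) / (2 * m * (1 - m))) m := by
  have hrec := ellipticIntegral_recurrence (-(1 / 2)) hm
  rw [show (-(1 / 2) + 1 : ℝ) = 1 / 2 by norm_num] at hrec
  have hE : 𝖤 m = (1 - m) * ellipticIntegral (-(1 / 2) - 1) m := by linarith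
  refine (hasDerivAt_ellipticIntegral _ hm hm₀).congr_deriv ?_
  have : 1 - m ≠ 0 := by linarith
  rw [hE]
  field

/-- The left-hand side of the Legendre relation `𝓔 𝒦' + 𝓔' 𝒦 - 𝒦 𝒦' = π / 2`, as a function of
the parameter `m = r²`. -/
noncomputable def legendreForm (m : ℝ) : ℝ :=
  𝖤 m * 𝖪 (1 - m) + 𝖤 (1 - m) * 𝖪 m - 𝖪 m * 𝖪 (1 - m)

lemma hasDerivAt_legendreForm (hm : m ∈ Ioo (0 : ℝ) 1) : HasDerivAt legendreForm 0 m := by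
  have hm₀ : m ≠ 0 := hm.1.ne'
  have hm₁ : 1 - m ≠ 0 := (sub_pos.2 hm.2).ne'
  have hK := hasDerivAt_ellipticIntegral_neg_half hm.2 hm₀
  have hE := hasDerivAt_ellipticIntegral_half hm.2 hm₀
  have hK' := (hasDerivAt_ellipticIntegral_neg_half (sub_lt_self 1 hm.1) hm₁).comp_const_sub 1 m
  have hE' := (hasDerivAt_ellipticIntegral_half (sub_lt_self 1 hm.1) hm₁).comp_const_sub 1 m
  refine (((hE.mul hK').add (hE'.mul hK)).sub (hK.mul hK')).congr_deriv ?_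
  rw [sub_sub_cancel]
  field

lemma tendsto_mul_ellipticIntegral_neg_half_one_sub :
    Tendsto (fun m ↦ m * 𝖪 (1 - m)) (𝓝[>] 0) (𝓝 0) := by
  have hsqrt : Tendsto (fun m ↦ π / 2 * √m) (𝓝[>] 0) (𝓝 0) :=
    ((show Continuous fun m ↦ π / 2 * √m by fun_prop).tendsto' 0 0 (by simp)).mono_left
      nhdsWithin_le_nhds
  refine squeeze_zero' ?_ ?_ hsqrt
  all_goals filter_upwards [Ioo_mem_nhdsGT one_pos] with m hm
  · exact mul_nonneg hm.1.le (ellipticIntegral_pos (sub_lt_self 1 hm.1) _).le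
  · calc m * 𝖪 (1 - m) ≤ m * (π / 2 * m ^ (-(1 / 2) : ℝ)) := by
          have := ellipticIntegral_le (p := -(1 / 2)) (by norm_num) (sub_nonneg.2 hm.2.le)
            (sub_lt_self 1 hm.1)
          rw [sub_sub_cancel] at this
          exact mul_le_mul_of_nonneg_left this hm.1.le
      _ = π / 2 * √m := by
          rw [Real.rpow_neg hm.1.le, ← Real.sqrt_eq_rpow]
          have := Real.sqrt_pos.2 hm.1
          nth_rw 1 [← Real.mul_self_sqrt hm.1.le]
          field

lemma tendsto_legendreForm : Tendsto legendreForm (𝓝[>] 0) (𝓝 (π / 2)) := by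
  have hK₀ := hasDerivAt_ellipticIntegral_integral (-(1 / 2)) one_pos
  have hE₀ := hasDerivAt_ellipticIntegral_integral (1 / 2) one_pos
  have hK : Tendsto 𝖪 (𝓝[>] 0) (𝓝 (π / 2)) := by
    simpa [ellipticIntegral_zero] using hK₀.continuousAt.tendsto.mono_left nhdsWithin_le_nhds
  have hE' : Tendsto (fun m ↦ 𝖤 (1 - m)) (𝓝[>] 0) (𝓝 1) :=
    (((continuous_ellipticIntegral (by norm_num)).comp (by fun_prop)).tendsto' 0 1
      (by simpa using ellipticIntegral_half_one)).mono_left nhdsWithin_le_nhds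
  -- `𝖪 - 𝖤` vanishes to first order at `0`, which beats the growth of `𝖪 (1 - m)`.
  have hslope := (hK₀.sub hE₀).tendsto_slope_zero_right
  have hsub : Tendsto (fun m ↦ (𝖪 m - 𝖤 m) * 𝖪 (1 - m)) (𝓝[>] 0) (𝓝 0) := by
    refine (mul_zero (_ : ℝ) ▸ hslope.mul tendsto_mul_ellipticIntegral_neg_half_one_sub).congr' ?_
    filter_upwards [self_mem_nhdsWithin] with m hm
    simp only [Pi.sub_apply, ellipticIntegral_zero, zero_add, sub_self, sub_zero, smul_eq_mul]
    field [(mem_Ioi.1 hm).ne']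
  convert (hE'.mul hK).sub hsub using 2
  · rw [legendreForm]
    ring
  · ring

theorem legendreForm_eq_pi_div_two (hm : m ∈ Ioo (0 : ℝ) 1) : legendreForm m = π / 2 := by
  refine tendsto_nhds_unique (tendsto_const_nhds.congr' ?_) tendsto_legendreForm
  filter_upwards [Ioo_mem_nhdsGT one_pos] with x hx
  exact isOpen_Ioo.is_const_of_deriv_eq_zero isPreconnected_Ioo
    (fun y hy ↦ (hasDerivAt_legendreForm hy).differentiableAt.differentiableWithinAt)
    (fun y hy ↦ (hasDerivAt_legendreForm hy).deriv) hm hx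

lemma hasDerivAt_ellipticIntegral_one_sub_div (hm : m ∈ Ioo (0 : ℝ) 1) :
    HasDerivAt (fun m ↦ 𝖪 (1 - m) / 𝖪 m) (-(π / (4 * m * (1 - m) * 𝖪 m ^ 2))) m := by
  have hm₀ : m ≠ 0 := hm.1.ne'
  have hm₁ : 1 - m ≠ 0 := (sub_pos.2 hm.2).ne'
  have hK := hasDerivAt_ellipticIntegral_neg_half hm.2 hm₀
  have hK' := (hasDerivAt_ellipticIntegral_neg_half (sub_lt_self 1 hm.1) hm₁).comp_const_sub 1 m
  have hK₀ := (ellipticIntegral_pos hm.2 (-(1 / 2))).ne'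
  refine (hK'.div hK hK₀).congr_deriv ?_
  have hLegendre := legendreForm_eq_pi_div_two hm
  rw [legendreForm] at hLegendre
  rw [sub_sub_cancel]
  field_simp
  linear_combination -4 * hLegendre

end EllipticIntegral

section GrotzschModulus

variable {r u s : ℝ}

lemma ellK_eq_ellipticIntegral (r : ℝ) : ellK r = ellipticIntegral (-(1 / 2)) (r ^ 2) := rfl

lemma strictMonoOn_ellK : StrictMonoOn ellK (Ico 0 1) := fun r hr s hs hrs ↦
  strictMonoOn_ellipticIntegral (by norm_num) (pow_lt_one₀ hr.1 hr.2 two_ne_zero)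
    (pow_lt_one₀ hs.1 hs.2 two_ne_zero) (pow_lt_pow_left₀ hrs hr.1 two_ne_zero)

lemma ellK_zero : ellK 0 = π / 2 := by
  rw [ellK_eq_ellipticIntegral, zero_pow two_ne_zero, ellipticIntegral_zero]

lemma pi_div_two_lt_ellK (hr : r ∈ Ioo (0 : ℝ) 1) : π / 2 < ellK r :=
  ellK_zero ▸ strictMonoOn_ellK ⟨le_rfl, one_pos⟩ (Ioo_subset_Ico_self hr) hr.1

lemma ellK_pos (hr : r ∈ Ioo (0 : ℝ) 1) : 0 < ellK r :=
  Real.pi_div_two_pos.trans (pi_div_two_lt_ellK hr)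

lemma mu_eq_ellipticIntegral (hr : r ^ 2 ≤ 1) :
    mu r = π / 2 *
      (ellipticIntegral (-(1 / 2)) (1 - r ^ 2) / ellipticIntegral (-(1 / 2)) (r ^ 2)) := by
  rw [mu, mul_div_assoc, ellK_eq_ellipticIntegral, ellK_eq_ellipticIntegral,
    Real.sq_sqrt (sub_nonneg.2 hr)]

theorem hasDerivAt_mu (hr : r ∈ Ioo (0 : ℝ) 1) :
    HasDerivAt mu (-(π ^ 2 / (4 * r * (1 - r ^ 2) * ellK r ^ 2))) r := by
  have hr₂ : r ^ 2 < 1 := pow_lt_one₀ hr.1.le hr.2 two_ne_zero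
  have hratio := (hasDerivAt_ellipticIntegral_one_sub_div ⟨pow_pos hr.1 2, hr₂⟩).comp
    (h := (· ^ 2)) r (hasDerivAt_pow 2 r)
  refine ((hratio.const_mul (π / 2)).congr_of_eventuallyEq ?_).congr_deriv ?_
  · filter_upwards [(continuous_pow 2).continuousAt.eventually_lt_const hr₂] with x hx
    exact mu_eq_ellipticIntegral hx.le
  · have := ellK_pos hr
    have := hr.1
    have := sub_pos.2 hr₂
    rw [← ellK_eq_ellipticIntegral]
    push_cast
    field

lemma continuousOn_mu : ContinuousOn mu (Ioo 0 1) := fun _ hr ↦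
  (hasDerivAt_mu hr).continuousAt.continuousWithinAt

lemma strictAntiOn_mu : StrictAntiOn mu (Ioo 0 1) := by
  refine strictAntiOn_of_deriv_neg (convex_Ioo 0 1) continuousOn_mu fun r hr ↦ ?_
  rw [interior_Ioo] at hr
  rw [(hasDerivAt_mu hr).deriv]
  have := ellK_pos hr
  have := hr.1
  have : 0 < 1 - r ^ 2 := sub_pos.2 (pow_lt_one₀ hr.1.le hr.2 two_ne_zero)
  exact neg_neg_of_pos (by positivity)

lemma one_div_sq_sub_one_pos (hr : r ∈ Ioo (0 : ℝ) 1) : 0 < 1 / r ^ 2 - 1 :=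
  sub_pos.2 ((one_lt_div (pow_pos hr.1 2)).2 (pow_lt_one₀ hr.1.le hr.2 two_ne_zero))

lemma hasDerivAt_log_one_div_sq_sub_one (hr : r ∈ Ioo (0 : ℝ) 1) :
    HasDerivAt (fun r ↦ Real.log (1 / r ^ 2 - 1)) (-(2 / (r * (1 - r ^ 2)))) r := by
  have hr₀ : r ≠ 0 := hr.1.ne'
  have hr₂ : 1 - r ^ 2 ≠ 0 := (sub_pos.2 (pow_lt_one₀ hr.1.le hr.2 two_ne_zero)).ne'
  have hinv := (((hasDerivAt_pow 2 r).inv (pow_ne_zero 2 hr₀)).sub_const 1)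
  simp only [Pi.inv_apply, ← one_div] at hinv
  refine (hinv.log (one_div_sq_sub_one_pos hr).ne').congr_deriv ?_
  rw [show 1 / r ^ 2 - 1 = (1 - r ^ 2) / r ^ 2 by field]
  push_cast
  field

theorem exists_log_sub_log_eq_mul_mu_sub (hu : 0 < u) (hus : u < s) (hs : s < 1) :
    ∃ c ∈ Ioo u s, Real.log (1 / u ^ 2 - 1) - Real.log (1 / s ^ 2 - 1) =
      8 * ellK c ^ 2 / π ^ 2 * (mu u - mu s) := by
  have hsub : Icc u s ⊆ Ioo 0 1 := fun x hx ↦ ⟨hu.trans_le hx.1, hx.2.trans_lt hs⟩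
  obtain ⟨c, hc, heq⟩ := exists_ratio_hasDerivAt_eq_ratio_slope
    (fun r ↦ Real.log (1 / r ^ 2 - 1)) _ hus
    (fun r hr ↦ (hasDerivAt_log_one_div_sq_sub_one (hsub hr)).continuousAt.continuousWithinAt)
    (fun r hr ↦ hasDerivAt_log_one_div_sq_sub_one (hsub (Ioo_subset_Icc_self hr)))
    mu _ (continuousOn_mu.mono hsub)
    (fun r hr ↦ hasDerivAt_mu (hsub (Ioo_subset_Icc_self hr)))
  have hc' := hsub (Ioo_subset_Icc_self hc)
  have := ellK_pos hc'
  have := hc'.1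
  have := sub_pos.2 (pow_lt_one₀ hc'.1.le hc'.2 two_ne_zero)
  refine ⟨c, hc, ?_⟩
  generalize Real.log (1 / u ^ 2 - 1) = Lu, Real.log (1 / s ^ 2 - 1) = Ls at heq ⊢
  field_simp at heq ⊢
  linear_combination -heq

lemma two_mul_mu_sub_lt_log_sub_log (hu : 0 < u) (hus : u < s) (hs : s < 1) :
    2 * (mu u - mu s) < Real.log (1 / u ^ 2 - 1) - Real.log (1 / s ^ 2 - 1) := by
  obtain ⟨c, hc, heq⟩ := exists_log_sub_log_eq_mul_mu_sub hu hus hs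
  have hmu := strictAntiOn_mu ⟨hu, hus.trans hs⟩ ⟨hu.trans hus, hs⟩ hus
  rw [heq]
  refine mul_lt_mul_of_pos_right ?_ (sub_pos.2 hmu)
  calc 2 = 8 * (π / 2) ^ 2 / π ^ 2 := by field
    _ < 8 * ellK c ^ 2 / π ^ 2 := by
      have := pi_div_two_lt_ellK ⟨hu.trans hc.1, hc.2.trans hs⟩
      gcongr

lemma log_sub_log_lt_mul_mu_sub (hu : 0 < u) (hus : u < s) (hs : s < 1) :
    Real.log (1 / u ^ 2 - 1) - Real.log (1 / s ^ 2 - 1) <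
      8 * ellK s ^ 2 / π ^ 2 * (mu u - mu s) := by
  obtain ⟨c, hc, heq⟩ := exists_log_sub_log_eq_mul_mu_sub hu hus hs
  have hmu := strictAntiOn_mu ⟨hu, hus.trans hs⟩ ⟨hu.trans hus, hs⟩ hus
  have hc' : c ∈ Ioo (0 : ℝ) 1 := ⟨hu.trans hc.1, hc.2.trans hs⟩
  have hK := strictMonoOn_ellK (Ioo_subset_Ico_self hc') ⟨(hu.trans hus).le, hs⟩ hc.2
  have := ellK_pos hc'
  rw [heq]
  exact mul_lt_mul_of_pos_right (by gcongr) (sub_pos.2 hmu)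

lemma tendsto_log_one_div_sq_sub_one :
    Tendsto (fun r : ℝ ↦ Real.log (1 / r ^ 2 - 1)) (𝓝[>] 0) atTop := by
  have hpow := (tendsto_pow_atTop (α := ℝ) two_ne_zero).comp tendsto_inv_nhdsGT_zero
  refine Real.tendsto_log_atTop.comp ((tendsto_atTop_add_const_right _ (-1) hpow).congr fun r ↦ ?_)
  simp [sub_eq_add_neg]

lemma tendsto_mu_nhdsGT_zero : Tendsto mu (𝓝[>] 0) atTop := by
  obtain ⟨s, hs⟩ : (Ioo (0 : ℝ) 1).Nonempty := nonempty_Ioo.2 one_pos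
  set C := 8 * ellK s ^ 2 / π ^ 2
  have hC : 0 < C := by have := ellK_pos hs; positivity
  have hlower : Tendsto (fun u ↦ (Real.log (1 / u ^ 2 - 1) + -Real.log (1 / s ^ 2 - 1)) / C + mu s)
      (𝓝[>] 0) atTop :=
    tendsto_atTop_add_const_right _ _
      ((tendsto_atTop_add_const_right _ _ tendsto_log_one_div_sq_sub_one).atTop_div_const hC)
  refine tendsto_atTop_mono' _ ?_ hlower
  filter_upwards [Ioo_mem_nhdsGT hs.1] with u hu
  have := (div_lt_iff₀' hC).2 (log_sub_log_lt_mul_mu_sub hu.1 hu.2 hs.2)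
  rw [← sub_eq_add_neg]
  linarith

lemma surjOn_mu (hs : s ∈ Ioo (0 : ℝ) 1) : SurjOn mu (Ioo 0 s) (Ioi (mu s)) := by
  refine isPreconnected_Ioo.intermediate_value_Ioi (l₁ := 𝓝[<] s) (l₂ := 𝓝[>] 0)
    (le_principal_iff.2 (Ioo_mem_nhdsLT hs.1)) (le_principal_iff.2 (Ioo_mem_nhdsGT hs.1))
    (continuousOn_mu.mono (Ioo_subset_Ioo_right hs.2.le)) ?_ tendsto_mu_nhdsGT_zero
  exact (hasDerivAt_mu hs).continuousAt.tendsto.mono_left nhdsWithin_le_nhds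

lemma mu_pos (hr : r ∈ Ioo (0 : ℝ) 1) : 0 < mu r := by
  rw [mu_eq_ellipticIntegral (pow_le_one₀ hr.1.le hr.2.le)]
  have := ellipticIntegral_pos (pow_lt_one₀ hr.1.le hr.2 two_ne_zero) (-(1 / 2))
  have := ellipticIntegral_pos (sub_lt_self 1 (pow_pos hr.1 2)) (-(1 / 2))
  positivity

theorem one_div_sq_sub_one_bounds_of_mu_eq {K : ℝ} (hK : 1 < K) (hu : u ∈ Ioo (0 : ℝ) 1)
    (hs : s ∈ Ioo (0 : ℝ) 1) (hmu : mu u = K * mu s) :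
    (1 / s ^ 2 - 1) * Real.exp (2 * (K - 1) * mu s) < 1 / u ^ 2 - 1 ∧
      1 / u ^ 2 - 1 <
        (1 / s ^ 2 - 1) * Real.exp (4 * (K - 1) * ellK √(1 - s ^ 2) * ellK s / π) := by
  have hus : u < s :=
    (strictAntiOn_mu.lt_iff_gt hs hu).1 (hmu ▸ lt_mul_of_one_lt_left (mu_pos hs) hK)
  have hlower := two_mul_mu_sub_lt_log_sub_log hu.1 hus hs.2
  have hupper := log_sub_log_lt_mul_mu_sub hu.1 hus hs.2
  have hsub : mu u - mu s = (K - 1) * mu s := by rw [hmu]; ring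
  have hrate : 8 * ellK s ^ 2 / π ^ 2 * ((K - 1) * mu s) =
      4 * (K - 1) * ellK √(1 - s ^ 2) * ellK s / π := by
    rw [mu]
    field [(ellK_pos hs).ne']
  have hs₀ := one_div_sq_sub_one_pos hs
  have hu₀ := one_div_sq_sub_one_pos hu
  rw [← Real.log_div hu₀.ne' hs₀.ne', hsub] at hlower hupper
  rw [hrate, Real.log_lt_iff_lt_exp (div_pos hu₀ hs₀), div_lt_iff₀' hs₀] at hupper
  rw [Real.lt_log_iff_exp_lt (div_pos hu₀ hs₀), lt_div_iff₀' hs₀, ← mul_assoc] at hlower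
  exact ⟨hlower, hupper⟩

end GrotzschModulus

theorem stmt_11 (eta : ℝ → ℝ → ℝ)
    (heta : ∀ K t : ℝ, 0 < K → 0 < t → ∀ u ∈ Set.Ioo (0:ℝ) 1,
      mu u = K * mu (1 / Real.sqrt (1 + t)) → eta K t = 1 / u ^ 2 - 1) :
    ∀ t K : ℝ, 0 < t → 1 < K →
      t * Real.exp (2 * (K - 1) * mu (1 / Real.sqrt (1 + t))) < eta K t ∧
      eta K t < t * Real.exp (4 * (K - 1) * ellK (Real.sqrt (t / (1 + t))) *
        ellK (1 / Real.sqrt (1 + t)) / Real.pi) := by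
  intro t K ht hK
  have hs_sq : (1 / √(1 + t)) ^ 2 = 1 / (1 + t) := by
    rw [div_pow, one_pow, Real.sq_sqrt (by positivity)]
  have ht_eq : 1 / (1 / √(1 + t)) ^ 2 - 1 = t := by rw [hs_sq, one_div_one_div, add_sub_cancel_left]
  have hr : 1 - (1 / √(1 + t)) ^ 2 = t / (1 + t) := by rw [hs_sq]; field
  have hs : 1 / √(1 + t) ∈ Ioo (0 : ℝ) 1 :=
    ⟨by positivity, (div_lt_one (by positivity)).2 (Real.lt_sqrt_of_sq_lt (by linarith))⟩
  obtain ⟨u, hu, hmu⟩ := surjOn_mu hs (lt_mul_of_one_lt_left (mu_pos hs) hK)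
  have hu₁ : u ∈ Ioo (0 : ℝ) 1 := ⟨hu.1, hu.2.trans hs.2⟩
  have hbounds := one_div_sq_sub_one_bounds_of_mu_eq hK hu₁ hs hmu
  rwa [ht_eq, hr, ← heta K t (by linarith) ht u hu₁ hmu] at hbounds
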